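/- Let M ≥ 1 and let Q_k, L_k : ℝ^M → ℝ for k = 1,…,M and C_k ∈ ℝ be such that: each λ ↦ Q_k(λ) and λ ↦ L_k(λ) is continuous; |Q_k(λ) − λ_k|λ_k|| ≤ ‖λ‖²/(2M) for all λ ∈ ℝ^M and all k; and |L_k(λ)| ≤ D‖λ‖ and |C_k| ≤ E for constants D, E ≥ 0. Then there exists λ ∈ ℝ^M such that Q_k(λ) + L_k(λ) + C_k = 0 for all k = 1,…,M. -/

import Mathlib

/-!
The system is solved by Brouwer's fixed point theorem applied to
`l ↦ (s (l k * |l k| - F k l))ₖ`, where `s` is the signed square root: since `(s y) ^ 2 = |y|`, the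
squared norm of the image is the sum of the errors `|l k * |l k| - F k l|`, which is at most `R ^ 2`
on a large ball of radius `R`.

Brouwer's theorem is proved analytically, in the spirit of Milnor and Rogers. Let `g` be a `C¹` map
vanishing off a ball `B`. For small `t` the map `x ↦ x + t • g x` is a bijection of `B` with
positive Jacobian, so `∫ x in B, det (1 + t • g' x) * q (‖x + t • g x‖ ^ 2)` does not depend on `t`.
For a polynomial `q` it is a polynomial in `t`, hence it is constant up to `t = 1`, and by
Weierstrass approximation the values at `t = 0` and `t = 1` agree for continuous `q` too. If
`x + g x` were never zero, a `q` concentrated near `0` would make the integral vanish at `t = 1` but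
not at `t = 0`. A zero of `x + g x` for continuous `g` follows by smoothing, and a fixed point of
`f` on the ball by taking for `-g` a bounded extension of `f` times a cutoff function.
-/

open Filter MeasureTheory Metric Polynomial Set
open scoped NNReal Topology

section Interpolation

theorem eval_eq_sum_lagrange_basis_mul_eval {F : Type*} [Field F] [DecidableEq F] {p : F[X]}
    {s : Finset F} (hp : p.degree < s.card) (a : F) :
    p.eval a = ∑ t ∈ s, (Lagrange.basis s id t).eval a * p.eval t := by
  conv_lhs => rw [Lagrange.eq_interpolate (v := id) (injOn_id _) hp, Lagrange.interpolate_apply,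
    eval_finsetSum]
  simp [mul_comm]

theorem integral_eval_eq_of_forall_mem_infinite {α : Type*} [MeasurableSpace α] {μ : Measure α}
    {p : α → ℝ[X]} {n : ℕ} {S : Set ℝ} {c : ℝ} (hp : ∀ x, (p x).natDegree ≤ n) (hS : S.Infinite)
    (hint : ∀ t ∈ S, Integrable (fun x ↦ (p x).eval t) μ)
    (hc : ∀ t ∈ S, ∫ x, (p x).eval t ∂μ = c) (a : ℝ) :
    ∫ x, (p x).eval a ∂μ = c := by
  obtain ⟨s, hsS, hs_card⟩ := hS.exists_subset_card_eq (n + 1)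
  have degree_lt (x : α) : (p x).degree < s.card :=
    degree_le_natDegree.trans_lt <| by
      rw [hs_card]; exact_mod_cast Nat.lt_succ_of_le (hp x)
  have sum_weights : ∑ t ∈ s, (Lagrange.basis s id t).eval a = 1 := by
    rw [← eval_finsetSum, Lagrange.sum_basis (injOn_id _) (Finset.card_pos.1 (by lia)), eval_one]
  calc ∫ x, (p x).eval a ∂μ
      = ∫ x, ∑ t ∈ s, (Lagrange.basis s id t).eval a * (p x).eval t ∂μ := by
        simp_rw [← eval_eq_sum_lagrange_basis_mul_eval (degree_lt _)]
    _ = ∑ t ∈ s, (Lagrange.basis s id t).eval a * ∫ x, (p x).eval t ∂μ := by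
        rw [integral_finsetSum _ fun t ht ↦ (hint t (hsS ht)).const_mul _]
        simp_rw [integral_const_mul]
    _ = ∑ t ∈ s, (Lagrange.basis s id t).eval a * c :=
        Finset.sum_congr rfl fun t ht ↦ by rw [hc t (hsS ht)]
    _ = c := by rw [← Finset.sum_mul, sum_weights, one_mul]

end Interpolation

section Perturbation

variable {V : Type*} [NormedAddCommGroup V] [NormedSpace ℝ V]

theorem bijective_add_of_lipschitzWith [CompleteSpace V] {g : V → V} {K : ℝ≥0}
    (hg : LipschitzWith K g) (hK : K < 1) : Function.Bijective fun x ↦ x + g x := by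
  have approx : ApproximatesLinearOn (fun x ↦ x + g x)
      (ContinuousLinearEquiv.refl ℝ V : V →L[ℝ] V) univ K :=
    ApproximatesLinearOn.approximatesLinearOn_iff_lipschitzOnWith.2 <| by
      simpa [Function.comp_def, Pi.sub_def] using hg
  have hK' : Subsingleton V ∨
      K < ‖((ContinuousLinearEquiv.refl ℝ V).symm : V →L[ℝ] V)‖₊⁻¹ := by
    rcases subsingleton_or_nontrivial V with hV | hV
    · exact .inl hV
    · right; simpa using! hK
  exact ⟨injOn_univ.1 (approx.injOn hK'), approx.surjective hK'⟩

theorem image_eq_self_of_eqOn_compl {α : Type*} {f : α → α} {s : Set α}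
    (hf : Function.Bijective f) (hfs : EqOn f id sᶜ) : f '' s = s := by
  rw [← compl_inj_iff, ← image_compl_eq hf, hfs.image_eq, image_id]

variable [FiniteDimensional ℝ V]

theorem det_one_add_pos_of_norm_lt_one {A : V →L[ℝ] V} (hA : ‖A‖ < 1) : 0 < (1 + A).det := by
  have det_ne_zero : ∀ T ∈ ball (0 : V →L[ℝ] V) 1, (1 + T).det ≠ 0 := fun T hT ↦ by
    have unit : IsUnit (1 + T) := by
      simpa using isUnit_one_sub_of_norm_lt_one (x := -T) (by simpa using hT)
    exact (LinearMap.isUnit_iff_isUnit_det _).1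
      (unit.map (ContinuousLinearMap.toLinearMapRingHom (R₁ := ℝ) (M₁ := V))) |>.ne_zero
  have cont : Continuous fun T : V →L[ℝ] V ↦ (1 + T).det :=
    ContinuousLinearMap.continuous_det.comp (by fun_prop)
  by_contra! hneg
  obtain ⟨T, hT, hT0⟩ := (convex_ball (0 : V →L[ℝ] V) 1).isPreconnected.intermediate_value₂
    (a := A) (b := 0) (by simpa using hA) (by simp) cont.continuousOn continuousOn_const hneg
    (by simp [ContinuousLinearMap.det])
  exact det_ne_zero T hT hT0

variable [MeasurableSpace V] [BorelSpace V]

theorem integral_det_one_add_fderiv_smul {E : Type*} [NormedAddCommGroup E] [NormedSpace ℝ E]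
    (μ : Measure V) [μ.IsAddHaarMeasure] {g : V → V} {K : ℝ≥0} {s : Set V}
    (hg : Differentiable ℝ g) (hgK : LipschitzWith K g) (hK : K < 1) (hs : MeasurableSet s)
    (hgs : ∀ x ∉ s, g x = 0) (φ : V → E) :
    ∫ x in s, (1 + fderiv ℝ g x).det • φ (x + g x) ∂μ = ∫ x in s, φ x ∂μ := by
  have bij := bijective_add_of_lipschitzWith hgK hK
  have image_eq : (fun x ↦ x + g x) '' s = s :=
    image_eq_self_of_eqOn_compl bij fun x hx ↦ by simp [hgs x hx]
  have det_pos (x : V) : 0 < (1 + fderiv ℝ g x).det :=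
    det_one_add_pos_of_norm_lt_one <|
      (norm_fderiv_le_of_lipschitz ℝ hgK).trans_lt (by exact_mod_cast hK)
  have change_of_variables := integral_image_eq_integral_abs_det_fderiv_smul μ hs
    (fun x _ ↦ ((hasFDerivAt_id x).add (hg x).hasFDerivAt).hasFDerivWithinAt) bij.injective.injOn φ
  rw [show id + g = fun x ↦ x + g x from rfl, image_eq] at change_of_variables
  simpa only [← ContinuousLinearMap.one_def, abs_of_pos (det_pos _)]
    using change_of_variables.symm

end Perturbation

section PolynomialDependence

theorem exists_polynomial_eval_eq_matrix_det_one_add_smul {R n : Type*} [CommRing R] [Fintype n]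
    [DecidableEq n] (N : Matrix n n R) :
    ∃ p : R[X], p.natDegree ≤ Fintype.card n ∧ ∀ t, p.eval t = (1 + t • N).det := by
  refine ⟨((X : R[X]) • N.map C + (1 : Matrix n n R).map C).det, natDegree_det_X_add_C_le N 1,
    fun t ↦ ?_⟩
  rw [← coe_evalRingHom, RingHom.map_det]
  congr 1
  ext i j
  by_cases hij : i = j <;> simp [hij] <;> ring

theorem exists_polynomial_eval_eq_det_one_add_smul {K V : Type*} [Field K] [AddCommGroup V]
    [Module K V] [FiniteDimensional K V] (A : Module.End K V) :
    ∃ p : K[X], p.natDegree ≤ Module.finrank K V ∧ ∀ t, p.eval t = LinearMap.det (1 + t • A) := by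
  let b := Module.finBasis K V
  obtain ⟨p, hp_deg, hp⟩ :=
    exists_polynomial_eval_eq_matrix_det_one_add_smul (LinearMap.toMatrix b b A)
  refine ⟨p, hp_deg.trans_eq (Fintype.card_fin _), fun t ↦ ?_⟩
  rw [hp, ← LinearMap.det_toMatrix b, map_add, map_smul, LinearMap.toMatrix_one]

variable {V : Type*} [NormedAddCommGroup V] [InnerProductSpace ℝ V]

theorem exists_polynomial_eval_eq_norm_add_smul_sq (x y : V) :
    ∃ p : ℝ[X], p.natDegree ≤ 2 ∧ ∀ t, p.eval t = ‖x + t • y‖ ^ 2 := by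
  refine ⟨C (‖y‖ ^ 2) * X ^ 2 + C (2 * inner ℝ x y) * X + C (‖x‖ ^ 2), natDegree_quadratic_le,
    fun t ↦ ?_⟩
  rw [norm_add_sq_real, norm_smul, inner_smul_right, mul_pow, Real.norm_eq_abs, sq_abs]
  simp only [eval_add, eval_mul, eval_C, eval_pow, eval_X]
  ring

end PolynomialDependence

section Approximation

theorem exists_seq_polynomial_tendstoUniformlyOn {f : ℝ → ℝ} {a b : ℝ}
    (hf : ContinuousOn f (Icc a b)) :
    ∃ q : ℕ → ℝ[X], TendstoUniformlyOn (fun n x ↦ (q n).eval x) f atTop (Icc a b) := by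
  choose q hq using fun n : ℕ ↦
    exists_polynomial_near_of_continuousOn a b f hf (1 / (n + 1)) Nat.one_div_pos_of_nat
  refine ⟨q, Metric.tendstoUniformlyOn_iff.2 fun ε hε ↦ ?_⟩
  filter_upwards [tendsto_one_div_add_atTop_nhds_zero_nat.eventually_lt_const hε] with n hn x hx
  rw [dist_comm]
  exact (hq n x hx).trans hn

theorem tendsto_integral_mul_comp_of_tendstoUniformlyOn {α β ι : Type*} [MeasurableSpace α]
    {μ : Measure α} {l : Filter ι} [l.IsCountablyGenerated] {F : ι → β → ℝ} {f : β → ℝ} {K : Set β}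
    {w : α → ℝ} {u : α → β} (hF : TendstoUniformlyOn F f l K) (hw : Integrable w μ)
    (hF_meas : ∀ i, AEStronglyMeasurable (fun x ↦ w x * F i (u x)) μ)
    (hf : Integrable (fun x ↦ w x * f (u x)) μ) (hu : ∀ᵐ x ∂μ, u x ∈ K) :
    Tendsto (fun i ↦ ∫ x, w x * F i (u x) ∂μ) l (𝓝 (∫ x, w x * f (u x) ∂μ)) := by
  refine tendsto_integral_filter_of_dominated_convergence (fun x ↦ ‖w x * f (u x)‖ + ‖w x‖)
    (.of_forall hF_meas) ?_ (hf.norm.add hw.norm) ?_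
  · filter_upwards [Metric.tendstoUniformlyOn_iff.1 hF 1 one_pos] with i hi
    filter_upwards [hu] with x hx
    calc ‖w x * F i (u x)‖ ≤ ‖w x * f (u x)‖ + ‖w x * f (u x) - w x * F i (u x)‖ :=
          norm_le_norm_add_norm_sub _ _
      _ = ‖w x * f (u x)‖ + ‖w x‖ * dist (f (u x)) (F i (u x)) := by
          rw [← mul_sub, norm_mul (w x) (_ - _), dist_eq_norm]
      _ ≤ ‖w x * f (u x)‖ + ‖w x‖ * 1 := by gcongr; exact (hi _ hx).le
      _ = ‖w x * f (u x)‖ + ‖w x‖ := by rw [mul_one]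
  · filter_upwards [hu] with x hx
    exact (hF.tendsto_at hx).const_mul (w x)

end Approximation

section Invariance

theorem continuous_det_one_add_fderiv {V : Type*} [NormedAddCommGroup V] [NormedSpace ℝ V]
    {g : V → V} (hg : ContDiff ℝ 1 g) : Continuous fun x ↦ (1 + fderiv ℝ g x).det :=
  ContinuousLinearMap.continuous_det.comp <|
    continuous_const.add (hg.continuous_fderiv one_ne_zero)

variable {V : Type*} [NormedAddCommGroup V] [InnerProductSpace ℝ V] [FiniteDimensional ℝ V]
  [MeasurableSpace V] [BorelSpace V] {g : V → V} {s : Set V}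

theorem integral_det_one_add_smul_mul_polynomial_norm_sq {K : ℝ≥0} {t : ℝ}
    (hg : Differentiable ℝ g) (hgK : LipschitzWith K g) (htK : ‖t‖₊ * K < 1)
    (hs : MeasurableSet s) (hgs : ∀ x ∉ s, g x = 0) (q : ℝ[X]) :
    ∫ x in s, (1 + t • fderiv ℝ g x).det * q.eval (‖x + t • g x‖ ^ 2) =
      ∫ x in s, q.eval (‖x‖ ^ 2) := by
  have lipschitz : LipschitzWith (‖t‖₊ * K) (t • g) := (lipschitzWith_smul t).comp hgK
  simpa [fderiv_const_smul hg.differentiableAt] using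
    integral_det_one_add_fderiv_smul volume (hg.const_smul t) lipschitz htK hs
    (fun x hx ↦ by simp [hgs x hx]) fun x ↦ q.eval (‖x‖ ^ 2)

theorem integral_det_mul_polynomial_norm_sq (hg : ContDiff ℝ 1 g) (hs : IsCompact s)
    (hgs : ∀ x ∉ s, g x = 0) (q : ℝ[X]) :
    ∫ x in s, (1 + fderiv ℝ g x).det * q.eval (‖x + g x‖ ^ 2) = ∫ x in s, q.eval (‖x‖ ^ 2) := by
  obtain ⟨K, hK⟩ := hg.lipschitzWith_of_hasCompactSupport (.intro hs hgs) one_ne_zero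
  choose p hp_deg hp using fun x ↦
    exists_polynomial_eval_eq_det_one_add_smul (fderiv ℝ g x).toLinearMap
  choose r hr_deg hr using fun x ↦ exists_polynomial_eval_eq_norm_add_smul_sq x (g x)
  have eval_eq (x : V) (t : ℝ) : (p x * q.comp (r x)).eval t =
      (1 + t • fderiv ℝ g x).det * q.eval (‖x + t • g x‖ ^ 2) := by
    rw [eval_mul, eval_comp, hp, hr]
    rfl
  have natDegree_le (x : V) :
      (p x * q.comp (r x)).natDegree ≤ Module.finrank ℝ V + q.natDegree * 2 :=
    natDegree_mul_le.trans <| add_le_add (hp_deg x) <|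
      natDegree_comp_le.trans <| Nat.mul_le_mul_left _ (hr_deg x)
  have integrable (t : ℝ) : IntegrableOn (fun x ↦ (p x * q.comp (r x)).eval t) s := by
    have det_cont := continuous_det_one_add_fderiv (hg.const_smul t)
    simp_rw [fderiv_fun_const_smul (hg.differentiable one_ne_zero _)] at det_cont
    have g_cont := hg.continuous
    simp_rw [eval_eq]
    exact (by fun_prop : Continuous _).continuousOn.integrableOn_compact hs
  have small {t : ℝ} (ht : t ∈ Ioo (0 : ℝ) (K + 1)⁻¹) : ‖t‖₊ * K < 1 := by
    rw [← NNReal.coe_lt_coe, NNReal.coe_mul, coe_nnnorm, Real.norm_of_nonneg ht.1.le]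
    calc t * K ≤ t * (K + 1) := by gcongr; exacts [ht.1.le, by linarith]
      _ < 1 := (lt_inv_mul_iff₀' (by positivity)).1 (by simpa using ht.2)
  have integral_eq := integral_eval_eq_of_forall_mem_infinite natDegree_le
    (Ioo_infinite (by positivity : (0 : ℝ) < (K + 1 : ℝ)⁻¹)) (fun t _ ↦ integrable t)
    (fun t ht ↦ by
      simpa only [eval_eq] using integral_det_one_add_smul_mul_polynomial_norm_sq
        (hg.differentiable one_ne_zero) hK (small ht) hs.measurableSet hgs q) 1
  simpa only [eval_eq, one_smul] using integral_eq

theorem integral_det_mul_comp_norm_sq (hg : ContDiff ℝ 1 g) (hs : IsCompact s)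
    (hgs : ∀ x ∉ s, g x = 0) {ψ : ℝ → ℝ} (hψ : Continuous ψ) :
    ∫ x in s, (1 + fderiv ℝ g x).det * ψ (‖x + g x‖ ^ 2) = ∫ x in s, ψ (‖x‖ ^ 2) := by
  have det_cont := continuous_det_one_add_fderiv hg
  have g_cont := hg.continuous
  have integrable {f : V → ℝ} (hf : Continuous f) : IntegrableOn f s :=
    hf.continuousOn.integrableOn_compact hs
  obtain ⟨b, hb⟩ := hs.bddAbove_image (f := fun x ↦ max (‖x‖ ^ 2) (‖x + g x‖ ^ 2)) (by fun_prop)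
  have le_b : ∀ x ∈ s, ‖x‖ ^ 2 ≤ b ∧ ‖x + g x‖ ^ 2 ≤ b := fun x hx ↦
    max_le_iff.1 (hb (mem_image_of_mem _ hx))
  obtain ⟨q, hq⟩ := exists_seq_polynomial_tendstoUniformlyOn (a := 0) (b := b) hψ.continuousOn
  have tendsto_perturbed := tendsto_integral_mul_comp_of_tendstoUniformlyOn hq
    (integrable det_cont) (fun n ↦ (integrable (by fun_prop)).1) (integrable (by fun_prop))
    (ae_restrict_of_forall_mem hs.measurableSet fun x hx ↦ ⟨sq_nonneg ‖x + g x‖, (le_b x hx).2⟩)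
  have tendsto_unperturbed := tendsto_integral_mul_comp_of_tendstoUniformlyOn hq
    (integrable continuous_one) (fun n ↦ (integrable (by fun_prop)).1) (integrable (by fun_prop))
    (ae_restrict_of_forall_mem hs.measurableSet fun x hx ↦ ⟨sq_nonneg ‖x‖, (le_b x hx).1⟩)
  simp only [Pi.one_apply, one_mul] at tendsto_unperturbed
  simp only [integral_det_mul_polynomial_norm_sq hg hs hgs] at tendsto_perturbed
  exact tendsto_nhds_unique tendsto_perturbed tendsto_unperturbed

end Invariance

section Brouwer

variable {V : Type*} [NormedAddCommGroup V] [InnerProductSpace ℝ V] [FiniteDimensional ℝ V]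

theorem exists_add_eq_zero_of_contDiff {g : V → V} (hg : ContDiff ℝ 1 g)
    (hsupp : HasCompactSupport g) : ∃ x, x + g x = 0 := by
  borelize V
  by_contra! hne
  obtain ⟨r, hr, supp_subset⟩ := hsupp.isCompact.isBounded.subset_closedBall_lt 0 (0 : V)
  have vanish : ∀ x ∉ closedBall 0 r, g x = 0 := fun x hx ↦
    image_eq_zero_of_notMem_tsupport (notMem_subset supp_subset hx)
  have B_compact : IsCompact (closedBall (0 : V) r) := isCompact_closedBall 0 r
  have g_cont := hg.continuous
  obtain ⟨x₀, -, hx₀⟩ := B_compact.exists_isMinOn ⟨0, mem_closedBall_self hr.le⟩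
    (by fun_prop : ContinuousOn (fun x ↦ ‖x + g x‖ ^ 2) _)
  let ψ (u : ℝ) : ℝ := max 0 (‖x₀ + g x₀‖ ^ 2 - u)
  have ψ_cont : Continuous ψ := by fun_prop
  have integral_eq_zero : ∫ x in closedBall (0 : V) r, ψ (‖x‖ ^ 2) = 0 := by
    rw [← integral_det_mul_comp_norm_sq hg B_compact vanish ψ_cont]
    refine setIntegral_eq_zero_of_forall_eq_zero fun x hx ↦ ?_
    rw [show ψ _ = 0 from max_eq_left (sub_nonpos.2 (hx₀ hx)), mul_zero]
  have integral_pos : 0 < ∫ x in closedBall (0 : V) r, ψ (‖x‖ ^ 2) := by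
    have ψ_zero_ne : ψ (‖(0 : V)‖ ^ 2) ≠ 0 := by simpa [ψ] using hne x₀
    have ψ_norm_sq_cont : Continuous fun x : V ↦ ψ (‖x‖ ^ 2) := by fun_prop
    have support_open : IsOpen (Function.support (fun x : V ↦ ψ (‖x‖ ^ 2)) ∩ ball 0 r) :=
      ψ_norm_sq_cont.isOpen_support.inter isOpen_ball
    refine (setIntegral_pos_iff_support_of_nonneg_ae (.of_forall fun _ ↦ le_max_left _ _)
      (ψ_norm_sq_cont.continuousOn.integrableOn_compact B_compact)).2 ?_
    exact (support_open.measure_pos volume ⟨0, ψ_zero_ne, mem_ball_self hr⟩).trans_le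
      (measure_mono (inter_subset_inter_right _ ball_subset_closedBall))
  exact integral_pos.ne' integral_eq_zero

theorem exists_add_eq_zero_of_continuous {g : V → V} (hg : Continuous g)
    (hsupp : HasCompactSupport g) : ∃ x, x + g x = 0 := by
  by_contra! hne
  obtain ⟨h, hh, h_near, h_supp⟩ := hg.exists_contDiff_approx (ε := fun x ↦ ‖x + g x‖) 1
    (by fun_prop) fun x ↦ norm_pos_iff.2 (hne x)
  obtain ⟨x, hx⟩ := exists_add_eq_zero_of_contDiff (mod_cast hh) (hsupp.mono h_supp)
  have dist_eq : dist (h x) (g x) = ‖x + g x‖ := by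
    rw [eq_neg_of_add_eq_zero_right hx, dist_eq_norm, ← neg_add', norm_neg]
  exact (h_near x).ne dist_eq

theorem exists_isFixedPt_of_mapsTo_closedBall {f : V → V} {r : ℝ} (hr : 0 ≤ r)
    (hf : ContinuousOn f (closedBall 0 r)) (hmaps : MapsTo f (closedBall 0 r) (closedBall 0 r)) :
    ∃ x ∈ closedBall 0 r, Function.IsFixedPt f x := by
  have norm_le : ∀ x : closedBall (0 : V) r, ‖f x‖ ≤ r := fun x ↦ by
    simpa using hmaps x.2
  obtain ⟨F, hF_norm, hF⟩ := BoundedContinuousFunction.exists_norm_eq_domRestrict_eq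
    isClosed_closedBall ℝ (BoundedContinuousFunction.ofNormedAddCommGroup
      ((closedBall 0 r).domRestrict f) hf.domRestrict r norm_le)
  have hFr (x : V) : ‖F x‖ ≤ r := (F.norm_coe_le_norm x).trans <|
    hF_norm.trans_le (BoundedContinuousFunction.norm_ofNormedAddCommGroup_le _ hr norm_le)
  obtain ⟨χ, hχ_one, -, hχ_supp, hχ⟩ := exists_continuous_one_zero_of_isCompact
    (isCompact_closedBall (0 : V) r) isClosed_empty (disjoint_empty _)
  obtain ⟨x, hx⟩ := exists_add_eq_zero_of_continuous (g := fun x ↦ -(χ x • F x)) (by fun_prop)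
    (HasCompactSupport.neg (hχ_supp.smul_right))
  have x_eq : x = χ x • F x := eq_of_sub_eq_zero (by rwa [sub_eq_add_neg])
  have x_mem : x ∈ closedBall 0 r := mem_closedBall_zero_iff.2 <| calc
    ‖x‖ = χ x * ‖F x‖ := by
      conv_lhs => rw [x_eq, norm_smul, Real.norm_of_nonneg (hχ x).1]
    _ ≤ 1 * r := by gcongr; exacts [(hχ x).2, hFr x]
    _ = r := one_mul r
  refine ⟨x, x_mem, ?_⟩
  calc f x = F x := (congrArg (· ⟨x, x_mem⟩) hF).symm
    _ = χ x • F x := by rw [hχ_one x_mem, Pi.one_apply, one_smul]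
    _ = x := x_eq.symm

end Brouwer

/-- The signed square root, the inverse of `x ↦ x * |x|`. At most one of the two terms is nonzero,
since `Real.sqrt` vanishes on negative numbers. -/
noncomputable def signedSqrt (y : ℝ) : ℝ := √y - √(-y)

namespace signedSqrt

theorem continuous : Continuous signedSqrt := by
  unfold signedSqrt; fun_prop

theorem mul_abs_self (y : ℝ) : signedSqrt y * |signedSqrt y| = y := by
  rcases le_total 0 y with hy | hy
  · simp [signedSqrt, Real.sqrt_eq_zero_of_nonpos (neg_nonpos.2 hy), abs_of_nonneg, hy]
  · simp [signedSqrt, Real.sqrt_eq_zero_of_nonpos hy, abs_of_nonneg,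
      Real.mul_self_sqrt (neg_nonneg.2 hy)]

theorem sq_eq_abs (y : ℝ) : signedSqrt y ^ 2 = |y| := by
  rw [← sq_abs, sq, ← abs_mul_abs_self]
  nth_rw 3 [← mul_abs_self y]
  simp

end signedSqrt

section System

variable {ι : Type*} [Fintype ι] {F : ι → EuclideanSpace ℝ ι → ℝ}

theorem exists_mem_closedBall_forall_eq_zero {R : ℝ} (hR : 0 ≤ R)
    (hF : ∀ k, ContinuousOn (F k) (closedBall 0 R))
    (hsum : ∀ l ∈ closedBall 0 R, ∑ k, |l k * |l k| - F k l| ≤ R ^ 2) :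
    ∃ l ∈ closedBall 0 R, ∀ k, F k l = 0 := by
  let Φ (l : EuclideanSpace ℝ ι) : EuclideanSpace ℝ ι :=
    WithLp.toLp 2 fun k ↦ signedSqrt (l k * |l k| - F k l)
  have continuousOn_Φ : ContinuousOn Φ (closedBall 0 R) :=
    (PiLp.continuous_toLp 2 _).comp_continuousOn <| continuousOn_pi.2 fun k ↦
      signedSqrt.continuous.comp_continuousOn <|
        (by fun_prop : Continuous _).continuousOn.sub (hF k)
  have mapsTo_Φ : MapsTo Φ (closedBall 0 R) (closedBall 0 R) := fun l hl ↦ by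
    refine mem_closedBall_zero_iff.2 <| abs_le_of_sq_le_sq' ?_ hR |>.2
    calc ‖Φ l‖ ^ 2 = ∑ k, |l k * |l k| - F k l| := by
          simp [Φ, EuclideanSpace.norm_sq_eq, signedSqrt.sq_eq_abs]
      _ ≤ R ^ 2 := hsum l hl
  obtain ⟨l, hl, hΦl⟩ := exists_isFixedPt_of_mapsTo_closedBall hR continuousOn_Φ mapsTo_Φ
  refine ⟨l, hl, fun k ↦ ?_⟩
  have l_eq : signedSqrt (l k * |l k| - F k l) = l k := congrArg (· k) hΦl
  have := signedSqrt.mul_abs_self (l k * |l k| - F k l)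
  rw [l_eq] at this
  linarith

theorem exists_forall_le_quadratic_le_sq {θ : ℝ} (hθ : θ < 1) (D E : ℝ) :
    ∃ R, 0 ≤ R ∧ ∀ r, 0 ≤ r → r ≤ R → θ * r ^ 2 + D * r + E ≤ R ^ 2 := by
  have gap_pos : 0 < 1 - max θ 0 := sub_pos.2 (max_lt hθ one_pos)
  set R := max 1 ((|D| + |E|) / (1 - max θ 0))
  have one_le_R : 1 ≤ R := le_max_left _ _
  have le_gap_mul : |D| + |E| ≤ (1 - max θ 0) * R := (div_le_iff₀' gap_pos).1 (le_max_right _ _)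
  refine ⟨R, by positivity, fun r hr hrR ↦ ?_⟩
  calc θ * r ^ 2 + D * r + E ≤ max θ 0 * R ^ 2 + |D| * R + |E| * R := by
        gcongr
        · exact le_max_left θ 0
        · exact le_abs_self D
        · exact (le_abs_self E).trans (le_mul_of_one_le_right (abs_nonneg E) one_le_R)
    _ = max θ 0 * R ^ 2 + (|D| + |E|) * R := by ring
    _ ≤ max θ 0 * R ^ 2 + (1 - max θ 0) * R * R := by gcongr
    _ = R ^ 2 := by ring

theorem stmt_5_general {θ D E : ℝ} (hθ : θ < 1) (hF : ∀ k, Continuous (F k))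
    (hsum : ∀ l, ∑ k, |l k * |l k| - F k l| ≤ θ * ‖l‖ ^ 2 + D * ‖l‖ + E) :
    ∃ l, ∀ k, F k l = 0 := by
  obtain ⟨R, hR, hRle⟩ := exists_forall_le_quadratic_le_sq hθ D E
  obtain ⟨l, -, hl⟩ := exists_mem_closedBall_forall_eq_zero hR (fun k ↦ (hF k).continuousOn)
    fun l hl ↦ (hsum l).trans (hRle _ (norm_nonneg l) (mem_closedBall_zero_iff.1 hl))
  exact ⟨l, hl⟩

end System

theorem stmt_5 (M : ℕ) (hM : 1 ≤ M)
    (Q L : Fin M → EuclideanSpace ℝ (Fin M) → ℝ) (C : Fin M → ℝ)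
    (hQcont : ∀ k, Continuous (Q k)) (hLcont : ∀ k, Continuous (L k))
    (hQest : ∀ (l : EuclideanSpace ℝ (Fin M)) (k : Fin M),
      abs (Q k l - l k * |l k|) ≤ ‖l‖ ^ 2 / (2 * M))
    (D E : ℝ) (hD : 0 ≤ D) (hE : 0 ≤ E)
    (hLest : ∀ (l : EuclideanSpace ℝ (Fin M)) (k : Fin M), |L k l| ≤ D * ‖l‖)
    (hCest : ∀ k : Fin M, |C k| ≤ E) :
    ∃ l : EuclideanSpace ℝ (Fin M), ∀ k : Fin M, Q k l + L k l + C k = 0 := by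
  refine stmt_5_general (θ := 1 / 2) (D := M * D) (E := M * E) one_half_lt_one (by fun_prop)
    fun l ↦ ?_
  calc ∑ k, |l k * |l k| - (Q k l + L k l + C k)|
      ≤ ∑ _k : Fin M, (‖l‖ ^ 2 / (2 * M) + D * ‖l‖ + E) := Finset.sum_le_sum fun k _ ↦ by
        rw [abs_sub_comm, add_sub_right_comm, add_sub_right_comm]
        exact (abs_add_three _ _ _).trans
          (add_le_add_three (hQest l k) (hLest l k) (hCest k))
    _ = 1 / 2 * ‖l‖ ^ 2 + M * D * ‖l‖ + M * E := by
        rw [Finset.sum_const, Finset.card_univ, Fintype.card_fin, nsmul_eq_mul]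
        field_simp
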